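/- Under the stated assumptions, for every k ≥ 0 the function M_k(s) extends analytically to the closed half-plane {s : Re(s) ≥ ρ} except at s = ρ, where it has a pole of order at most ⌊k/2⌋ + 1; moreover, for every even k ≥ 0, M_k(s) ∼ μ (σ²/2)^{k/2} k! · (s − ρ)^{−k/2−1} as s → ρ with Re(s) > ρ. -/

import Mathlib

open scoped BigOperators ENNReal
open Filter Asymptotics

noncomputable section

/-- `af P m n` is the number of ordered `m`-tuples `(n₁,…,n_m)` of elements of `P`
with product `n` (so `af P 0 n = 1` iff `n = 1`). -/
def af (P : Set ℕ) (m n : ℕ) : ℕ :=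
  Nat.card {t : Fin m → ℕ // (∀ i, t i ∈ P) ∧ ∏ i, t i = n}

/-- `aTot P n = a(n) = Σ_{m ≥ 0} a_m(n)`. -/
def aTot (P : Set ℕ) (n : ℕ) : ℝ := ∑' m : ℕ, (af P m n : ℝ)

/-- `Acum P N = A(N) = Σ_{1 ≤ n ≤ N} a(n)`. -/
def Acum (P : Set ℕ) (N : ℕ) : ℝ := ∑ n ∈ Finset.Icc 1 N, aTot P n

/-- The Dirichlet series `𝒫(x) = Σ_{n ∈ 𝒫} n^{-x}` at a real point. -/
def Pval (P : Set ℕ) (x : ℝ) : ℝ := ∑' n : P, ((n : ℕ) : ℝ) ^ (-x)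

/-- `𝒫'(x) = -Σ_{n ∈ 𝒫} n^{-x} log n`. -/
def Pderiv1 (P : Set ℕ) (x : ℝ) : ℝ := -∑' n : P, ((n : ℕ) : ℝ) ^ (-x) * Real.log (n : ℕ)

/-- `𝒫''(x) = Σ_{n ∈ 𝒫} n^{-x} (log n)^2`. -/
def Pderiv2 (P : Set ℕ) (x : ℝ) : ℝ := ∑' n : P, ((n : ℕ) : ℝ) ^ (-x) * (Real.log (n : ℕ)) ^ 2

/-- The abscissa of convergence `κ` of the Dirichlet series of `P`, as an extended real
(`⊥` when `P` is finite). -/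
def kappa (P : Set ℕ) : EReal :=
  sInf {x : EReal | ∃ r : ℝ, x = (r : EReal) ∧ Summable (fun n : P => ((n : ℕ) : ℝ) ^ (-r))}

open Classical in
/-- The (possibly infinite) value `𝒫(x) ∈ (0,∞]` of the Dirichlet series at an
extended-real point; at `x = -∞` every term `n^{-x}` is infinite. -/
def PvalE (P : Set ℕ) (x : EReal) : ℝ≥0∞ :=
  if x = ⊥ then ⊤ else ∑' n : P, ENNReal.ofReal (((n : ℕ) : ℝ) ^ (-x.toReal))

/-- `b_k(n) = Σ_{m ≥ 0} a_m(n) (m - μ log n)^k`. -/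
def bCoef (P : Set ℕ) (μ : ℝ) (k n : ℕ) : ℝ :=
  ∑' m : ℕ, (af P m n : ℝ) * ((m : ℝ) - μ * Real.log n) ^ k

/-- `M_k(s) = Σ_{n ≥ 1} b_k(n) n^{-s}`. -/
def Mser (P : Set ℕ) (μ : ℝ) (k : ℕ) (s : ℂ) : ℂ :=
  ∑' n : ℕ, (bCoef P μ k n : ℂ) * (n : ℂ) ^ (-s)

/-!
Grouping words over `P` by their product and length turns `M_k(s)` into a sum over all words. For
`Re s > ρ` the generating function of these moments is a geometric series, so that `M_k(s)` is the
`k`-th derivative at `t = 0` of `1 / (1 - e^t 𝒫(s + μ t))`. Writing `q_j(s)` for the `j`-th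
derivative at `t = 0` of `e^t 𝒫(s + μ t)`, this is the binomial recursion
`(1 - 𝒫) M_k = δ_{k,0} + ∑_{j < k} (k choose j) q_{k-j} M_j`, which continues `M_k` to every `s`
with `Re s > κ` and `𝒫(s) ≠ 1`.

At `ρ` the factor `1 - 𝒫` has a simple zero, and `μ` is chosen so that `q_1(ρ) = 0`. Passing from
`M_{k-1}` to `M_k` therefore costs no power of `s - ρ`, whereas passing from `M_{k-2}` to `M_k`
costs one; this bounds the pole order by `⌊k/2⌋ + 1`, and for even `k` only the steps of size two,
each weighted by `q_2(ρ) = σ² / μ`, contribute to the leading coefficient.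

If `𝒫(s) = 1` with `Re s ≥ ρ`, equality in the triangle inequality gives `n^{-s} = n^{-ρ}` for all
`n ∈ P`. If moreover `s ≠ ρ`, all `log n` are multiples of a single number, so that `P` consists of
powers of a single integer.
-/

section BinomialRecursion

variable {K : Type*} [Field K]

/-- The solution `c` of the triangular system
`u * c k = δ_{k,0} + ∑_{j < k} (k choose j) * a k j * c j`. If `u = 1 - q 0` and
`a k j = q (k - j)`, these are the derivatives at `0` of `1 / (1 - Q)`, where `Q` has derivatives
`q j` there. -/
def binomialRec (u : K) (a : ℕ → ℕ → K) (k : ℕ) : K :=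
  ((if k = 0 then 1 else 0) + ∑ j : Fin k, k.choose j * a k j * binomialRec u a j) / u

lemma binomialRec_eq (u : K) (a : ℕ → ℕ → K) (k : ℕ) :
    binomialRec u a k = ((if k = 0 then 1 else 0) +
      ∑ j ∈ Finset.range k, k.choose j * a k j * binomialRec u a j) / u := by
  rw [binomialRec, Finset.sum_range]

lemma eq_binomialRec {u : K} {a : ℕ → ℕ → K} {c : ℕ → K} (hu : u ≠ 0)
    (hc : ∀ k, u * c k = (if k = 0 then 1 else 0) + ∑ j ∈ Finset.range k, k.choose j * a k j * c j)
    (k : ℕ) : c k = binomialRec u a k := by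
  induction k using Nat.strong_induction_on with
  | _ k ih =>
    rw [binomialRec_eq, eq_div_iff hu, mul_comm, hc]
    exact congrArg _ (Finset.sum_congr rfl fun j hj => by rw [ih j (Finset.mem_range.1 hj)])

lemma binomialRec_mul_left {ε u : K} {a b : ℕ → ℕ → K} {w : ℕ → K} (hε : ε ≠ 0) (hw : w 0 = 1)
    (hab : ∀ k, ∀ j < k, a k j * w k = ε * w j * b k j) (k : ℕ) :
    binomialRec (ε * u) a k * (ε * w k) = binomialRec u b k := by
  induction k using Nat.strong_induction_on with
  | _ k ih =>
    have hδ : (if k = 0 then (1 : K) else 0) * w k = if k = 0 then 1 else 0 := by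
      split_ifs with hk <;> simp [hk, hw]
    have hsum : (∑ j ∈ Finset.range k, k.choose j * a k j * binomialRec (ε * u) a j) * w k =
        ∑ j ∈ Finset.range k, k.choose j * b k j * binomialRec u b j := by
      rw [Finset.sum_mul]
      refine Finset.sum_congr rfl fun j hj => ?_
      have hjk := Finset.mem_range.1 hj
      rw [← ih j hjk]
      linear_combination k.choose j * binomialRec (ε * u) a j * hab k j hjk
    rw [binomialRec_eq, binomialRec_eq u, ← hsum]
    field_simp
    rw [add_mul, hδ]

lemma binomialRec_two_mul [CharZero K] {u q : K} {a : ℕ → ℕ → K}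
    (ha : ∀ i, ∀ j < 2 * i, a (2 * i) j = if j + 2 = 2 * i then q else 0) (i : ℕ) :
    binomialRec u a (2 * i) = (q / (2 * u)) ^ i * (2 * i).factorial / u := by
  induction i with
  | zero =>
    rw [mul_zero, binomialRec_eq]
    simp
  | succ i ih =>
    have hsum : ∑ j ∈ Finset.range (2 * (i + 1)),
        ((2 * (i + 1)).choose j : K) * a (2 * (i + 1)) j * binomialRec u a j =
          (2 * (i + 1)).choose (2 * i) * q * binomialRec u a (2 * i) := by
      rw [Finset.sum_eq_single_of_mem (2 * i) (Finset.mem_range.2 (by omega)),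
        ha _ _ (by omega), if_pos (by ring)]
      intro j hj hne
      rw [ha _ _ (Finset.mem_range.1 hj), if_neg (by omega), mul_zero, zero_mul]
    have hchoose : ((2 * (i + 1)).choose (2 * i) : K) * (2 * i).factorial * 2 =
        (2 * (i + 1)).factorial := by
      have := Nat.choose_mul_factorial_mul_factorial (show 2 * i ≤ 2 * (i + 1) by omega)
      rw [show 2 * (i + 1) - 2 * i = 2 by omega, Nat.factorial_two] at this
      exact_mod_cast this
    rw [binomialRec_eq, if_neg (by omega), zero_add, hsum, ih, ← hchoose, pow_succ]
    field_simp

lemma analyticAt_binomialRec {𝕜 E : Type*} [NontriviallyNormedField 𝕜] [NormedAddCommGroup E]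
    [NormedSpace 𝕜 E] {u : E → 𝕜} {a : ℕ → ℕ → E → 𝕜} {z : E} (hu : AnalyticAt 𝕜 u z)
    (hu0 : u z ≠ 0) (ha : ∀ k j, AnalyticAt 𝕜 (a k j) z) (k : ℕ) :
    AnalyticAt 𝕜 (fun s => binomialRec (u s) (fun k j => a k j s) k) z := by
  induction k using Nat.strong_induction_on with
  | _ k ih =>
    simp only [fun s => binomialRec_eq (u s) (fun k j => a k j s) k]
    refine (analyticAt_const.add (Finset.analyticAt_fun_sum _ fun j hj => ?_)).div hu hu0
    exact (analyticAt_const.mul (ha k j)).mul (ih j (Finset.mem_range.1 hj))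

end BinomialRecursion

section Resolvent

variable {𝕜 : Type*} [NontriviallyNormedField 𝕜]

/-- The `j`-th derivative at `t = 0` of `t ↦ exp t * F (s + μ * t)`. -/
def tiltedDeriv (μ : 𝕜) (F : 𝕜 → 𝕜) (j : ℕ) (s : 𝕜) : 𝕜 :=
  ∑ i ∈ Finset.range (j + 1), j.choose i * μ ^ i * iteratedDeriv i F s

/-- The `k`-th derivative at `t = 0` of `t ↦ 1 / (1 - exp t * F (s + μ * t))`. -/
def resolventMoment (μ : 𝕜) (F : 𝕜 → 𝕜) (k : ℕ) (s : 𝕜) : 𝕜 :=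
  binomialRec (1 - F s) (fun k j => tiltedDeriv μ F (k - j) s) k

/-- The numerator of `resolventMoment μ F k` over `(s - z) ^ (k / 2 + 1)` at a point `z` where
`F z = 1` and `tiltedDeriv μ F 1 z = 0`: the recursion that is left after cancelling the zeros at
`z` of `1 - F` and of the first tilted derivative. -/
def resolventNumerator (μ : 𝕜) (F : 𝕜 → 𝕜) (z : 𝕜) (k : ℕ) (s : 𝕜) : 𝕜 :=
  binomialRec (-dslope F z s) (fun k j =>
    if j + 1 = k then dslope (tiltedDeriv μ F 1) z s * (s - z) ^ (k / 2 - j / 2)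
    else tiltedDeriv μ F (k - j) s * (s - z) ^ (k / 2 - j / 2 - 1)) k

lemma tiltedDeriv_zero (μ : 𝕜) (F : 𝕜 → 𝕜) (s : 𝕜) : tiltedDeriv μ F 0 s = F s := by
  simp [tiltedDeriv]

lemma tiltedDeriv_one (μ : 𝕜) (F : 𝕜 → 𝕜) (s : 𝕜) :
    tiltedDeriv μ F 1 s = F s + μ * deriv F s := by
  simp [tiltedDeriv, Finset.sum_range_succ]

lemma tiltedDeriv_two (μ : 𝕜) (F : 𝕜 → 𝕜) (s : 𝕜) :
    tiltedDeriv μ F 2 s = F s + 2 * μ * deriv F s + μ ^ 2 * iteratedDeriv 2 F s := by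
  simp [tiltedDeriv, Finset.sum_range_succ]

lemma resolventMoment_mul_pow {μ : 𝕜} {F : 𝕜 → 𝕜} {z s : 𝕜} (hF : F z = 1)
    (h1 : tiltedDeriv μ F 1 z = 0) (hs : s ≠ z) (k : ℕ) :
    resolventMoment μ F k s * (s - z) ^ (k / 2 + 1) = resolventNumerator μ F z k s := by
  have hu : 1 - F s = (s - z) * -dslope F z s := by
    have := sub_smul_dslope F z s
    rw [smul_eq_mul, hF] at this
    linear_combination this
  have hq : tiltedDeriv μ F 1 s = (s - z) * dslope (tiltedDeriv μ F 1) z s := by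
    simpa [h1] using (sub_smul_dslope (tiltedDeriv μ F 1) z s).symm
  rw [resolventMoment, resolventNumerator, hu, pow_succ']
  refine binomialRec_mul_left (w := fun k => (s - z) ^ (k / 2)) (sub_ne_zero.2 hs) (by simp)
    (fun k j hj => ?_) k
  split_ifs with hjk
  · rw [show k - j = 1 by omega, hq, ← Nat.add_sub_of_le (show j / 2 ≤ k / 2 by omega), pow_add,
      Nat.add_sub_cancel_left]
    ring
  · have : (s - z) ^ (k / 2) = (s - z) * (s - z) ^ (j / 2) * (s - z) ^ (k / 2 - j / 2 - 1) := by
      rw [← pow_succ', ← pow_add]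
      congr 1
      omega
    rw [this]
    ring

lemma resolventNumerator_self_of_even [CharZero 𝕜] {μ : 𝕜} {F : 𝕜 → 𝕜} {z : 𝕜} {k : ℕ}
    (hk : Even k) :
    resolventNumerator μ F z k z =
      (tiltedDeriv μ F 2 z / (2 * -deriv F z)) ^ (k / 2) * k.factorial / -deriv F z := by
  obtain ⟨i, rfl⟩ := even_iff_exists_two_mul.1 hk
  rw [resolventNumerator, Nat.mul_div_cancel_left i two_pos, dslope_same]
  refine binomialRec_two_mul (fun i j hj => ?_) i
  rw [sub_self]
  split_ifs with h1 h2 h2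
  · omega
  · rw [zero_pow (by omega), mul_zero]
  · rw [show 2 * i - j = 2 by omega, show 2 * i / 2 - j / 2 - 1 = 0 by omega, pow_zero, mul_one]
  · rw [zero_pow (by omega), mul_zero]

lemma analyticAt_dslope {F : 𝕜 → 𝕜} {z : 𝕜} (hF : AnalyticAt 𝕜 F z) :
    AnalyticAt 𝕜 (dslope F z) z :=
  let ⟨_, hp⟩ := hF
  ⟨_, hp.has_fpower_series_dslope_fslope⟩

variable [CompleteSpace 𝕜]

lemma analyticAt_tiltedDeriv {F : 𝕜 → 𝕜} {z : 𝕜} (hF : AnalyticAt 𝕜 F z) (μ : 𝕜) (j : ℕ) :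
    AnalyticAt 𝕜 (tiltedDeriv μ F j) z := by
  refine Finset.analyticAt_fun_sum _ fun i _ => analyticAt_const.mul ?_
  rw [iteratedDeriv_eq_iterate]
  exact hF.iterated_deriv i

lemma analyticAt_resolventMoment {F : 𝕜 → 𝕜} {z : 𝕜} (hF : AnalyticAt 𝕜 F z) (hz : F z ≠ 1)
    (μ : 𝕜) (k : ℕ) : AnalyticAt 𝕜 (resolventMoment μ F k) z :=
  analyticAt_binomialRec (analyticAt_const.sub hF) (sub_ne_zero.2 hz.symm)
    (fun _ _ => analyticAt_tiltedDeriv hF μ _) k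

lemma analyticAt_resolventNumerator {F : 𝕜 → 𝕜} {z : 𝕜} (hF : AnalyticAt 𝕜 F z)
    (hz : deriv F z ≠ 0) (μ : 𝕜) (k : ℕ) : AnalyticAt 𝕜 (resolventNumerator μ F z k) z := by
  refine analyticAt_binomialRec (analyticAt_dslope hF).neg (by simpa using hz) (fun k j => ?_) k
  have hpow (e : ℕ) : AnalyticAt 𝕜 (fun s => (s - z) ^ e) z :=
    (analyticAt_id.sub analyticAt_const).pow e
  split_ifs
  · exact (analyticAt_dslope (analyticAt_tiltedDeriv hF μ 1)).mul (hpow _)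
  · exact (analyticAt_tiltedDeriv hF μ _).mul (hpow _)

end Resolvent

section WordSum

variable {α : Type*}

/-- The contribution `(x (t 0) + ⋯ + x (t (m - 1))) ^ k * (z (t 0) * ⋯ * z (t (m - 1)))` of the word
`t` to the `k`-th moment of the additive statistic `x` under the multiplicative weight `z`. -/
def wordTerm {R : Type*} [CommSemiring R] (x z : α → R) (k : ℕ) {m : ℕ} (t : Fin m → α) : R :=
  (∑ i, x (t i)) ^ k * ∏ i, z (t i)

lemma wordTerm_fin_zero {R : Type*} [CommSemiring R] (x z : α → R) (k : ℕ) (t : Fin 0 → α) :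
    wordTerm x z k t = if k = 0 then 1 else 0 := by
  simp [wordTerm, zero_pow_eq]

lemma wordTerm_cons {R : Type*} [CommSemiring R] (x z : α → R) (k : ℕ) {m : ℕ} (a : α)
    (t : Fin m → α) :
    wordTerm x z k (Fin.cons a t : Fin (m + 1) → α) =
      ∑ j ∈ Finset.range (k + 1), k.choose j * (x a ^ (k - j) * z a) * wordTerm x z j t := by
  simp only [wordTerm, Fin.sum_univ_succ, Fin.prod_univ_succ, Fin.cons_zero, Fin.cons_succ]
  rw [add_comm, add_pow, Finset.sum_mul]
  exact Finset.sum_congr rfl fun j _ => by ring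

lemma tsum_wordTerm_cons {R : Type*} [CommSemiring R] [TopologicalSpace R] (x z : α → R)
    (k m : ℕ) :
    ∑' t : Fin (m + 1) → α, wordTerm x z k t = ∑' p : α × (Fin m → α),
      ∑ j ∈ Finset.range (k + 1),
        k.choose j * (x p.1 ^ (k - j) * z p.1) * wordTerm x z j p.2 := by
  rw [← (Fin.consEquiv fun _ : Fin (m + 1) => α).tsum_eq]
  exact tsum_congr fun p => wordTerm_cons x z k p.1 p.2

lemma tsum_ne_top_of_succ_le {f e : ℕ → ℝ≥0∞} {q : ℝ≥0∞} (hq : q < 1) (h0 : f 0 ≠ ⊤)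
    (he : ∑' n, e n ≠ ⊤) (hf : ∀ n, f (n + 1) ≤ q * f n + e n) : ∑' n, f n ≠ ⊤ := by
  have hq0 : 1 - q ≠ 0 := (tsub_pos_of_lt hq).ne'
  set B := (f 0 + ∑' n, e n) / (1 - q) with hBdef
  have hB : q * B + (f 0 + ∑' n, e n) = B := by
    rw [← ENNReal.div_mul_cancel (a := 1 - q) (b := f 0 + ∑' n, e n) hq0 (by simp), ← hBdef,
      mul_comm B, ← add_mul, add_tsub_cancel_of_le hq.le, one_mul]
  refine ((ENNReal.tsum_le_of_sum_range_le fun N => ?_).trans_lt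
    (ENNReal.div_lt_top (ENNReal.add_ne_top.2 ⟨h0, he⟩) hq0)).ne
  induction N with
  | zero => simp
  | succ N ih =>
    calc ∑ n ∈ Finset.range (N + 1), f n
        ≤ ∑ n ∈ Finset.range N, (q * f n + e n) + f 0 := by
          rw [Finset.sum_range_succ']
          gcongr
          exact hf _
      _ ≤ q * B + ∑' n, e n + f 0 := by
          rw [Finset.sum_add_distrib, ← Finset.mul_sum]
          gcongr
          exact ENNReal.sum_le_tsum _
      _ = B := by rw [add_assoc, add_comm (∑' n, e n), hB]

lemma tsum_wordTerm_succ_ennreal (x z : α → ℝ≥0∞) (k m : ℕ) :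
    ∑' t : Fin (m + 1) → α, wordTerm x z k t =
      ∑ j ∈ Finset.range (k + 1),
        k.choose j * (∑' a, x a ^ (k - j) * z a) * ∑' t : Fin m → α, wordTerm x z j t := by
  rw [tsum_wordTerm_cons, Summable.tsum_finsetSum fun _ _ => ENNReal.summable]
  refine Finset.sum_congr rfl fun j _ => ?_
  rw [ENNReal.tsum_prod (f := fun a t => k.choose j * (x a ^ (k - j) * z a) * wordTerm x z j t)]
  simp only [ENNReal.tsum_mul_left, ENNReal.tsum_mul_right]

lemma tsum_wordTerm_ne_top {x z : α → ℝ≥0∞} (hz : ∑' a, z a < 1)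
    (hxz : ∀ j, ∑' a, x a ^ j * z a ≠ ⊤) (k : ℕ) :
    ∑' w : Σ m, Fin m → α, wordTerm x z k w.2 ≠ ⊤ := by
  rw [ENNReal.tsum_sigma]
  induction k using Nat.strong_induction_on with
  | _ k ih =>
    refine tsum_ne_top_of_succ_le (e := fun m => ∑ j ∈ Finset.range k,
      k.choose j * (∑' a, x a ^ (k - j) * z a) * ∑' t : Fin m → α, wordTerm x z j t) hz ?_ ?_ ?_
    · simp only [wordTerm_fin_zero, tsum_fintype]
      split_ifs <;> simp
    · rw [Summable.tsum_finsetSum fun _ _ => ENNReal.summable]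
      refine ENNReal.sum_ne_top.2 fun j hj => ?_
      rw [ENNReal.tsum_mul_left]
      exact ENNReal.mul_ne_top (ENNReal.mul_ne_top (by simp) (hxz _)) (ih j (Finset.mem_range.1 hj))
    · intro m
      rw [tsum_wordTerm_succ_ennreal, Finset.sum_range_succ, add_comm]
      simp

variable {𝕜 : Type*} [NormedField 𝕜]

lemma enorm_wordTerm_le (x z : α → 𝕜) (k : ℕ) {m : ℕ} (t : Fin m → α) :
    ‖wordTerm x z k t‖ₑ ≤ wordTerm (fun a => ‖x a‖ₑ) (fun a => ‖z a‖ₑ) k t := by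
  simp only [wordTerm, enorm_mul, enorm_pow]
  gcongr
  · exact enorm_sum_le _ _
  · simp [enorm_eq_nnnorm, nnnorm_prod]

lemma summable_norm_wordTerm {x z : α → 𝕜} (hz : ∑' a, ‖z a‖ < 1)
    (hxz : ∀ j, Summable fun a => ‖x a ^ j * z a‖) (k : ℕ) :
    Summable fun w : Σ m, Fin m → α => ‖wordTerm x z k w.2‖ := by
  rw [← tsum_enorm_ne_top_iff_summable_norm]
  refine ne_top_of_le_ne_top (tsum_wordTerm_ne_top ?_ (fun j => ?_) k)
    (ENNReal.tsum_le_tsum fun w => enorm_wordTerm_le x z k w.2)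
  · simp_rw [← ofReal_norm]
    rw [← ENNReal.ofReal_tsum_of_nonneg (fun _ => norm_nonneg _) (by simpa using hxz 0)]
    simpa using hz
  · simpa [enorm_mul, enorm_pow] using tsum_enorm_ne_top_iff_summable_norm.2 (hxz j)

lemma tsum_wordTerm_succ [CompleteSpace 𝕜] {x z : α → 𝕜}
    (hxz : ∀ j, Summable fun a => ‖x a ^ j * z a‖) {m : ℕ}
    (hw : ∀ k, Summable fun t : Fin m → α => ‖wordTerm x z k t‖) (k : ℕ) :
    ∑' t : Fin (m + 1) → α, wordTerm x z k t =
      ∑ j ∈ Finset.range (k + 1),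
        k.choose j * (∑' a, x a ^ (k - j) * z a) * ∑' t : Fin m → α, wordTerm x z j t := by
  have hsum (j : ℕ) : Summable fun p : α × (Fin m → α) =>
      x p.1 ^ (k - j) * z p.1 * wordTerm x z j p.2 :=
    summable_mul_of_summable_norm (f := fun a => x a ^ (k - j) * z a) (hxz _) (hw j)
  simp only [tsum_wordTerm_cons, mul_assoc (Nat.cast _)]
  rw [Summable.tsum_finsetSum fun j _ => (hsum j).mul_left _]
  refine Finset.sum_congr rfl fun j _ => ?_
  rw [tsum_mul_left, tsum_mul_tsum_of_summable_norm (hxz _) (hw j)]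

lemma tsum_wordTerm_eq_binomialRec [CompleteSpace 𝕜] {x z : α → 𝕜} (hz : ∑' a, ‖z a‖ < 1)
    (hxz : ∀ j, Summable fun a => ‖x a ^ j * z a‖) (k : ℕ) :
    ∑' w : Σ m, Fin m → α, wordTerm x z k w.2 =
      binomialRec (1 - ∑' a, z a) (fun k j => ∑' a, x a ^ (k - j) * z a) k := by
  have hw := summable_norm_wordTerm hz hxz
  have hu : 1 - ∑' a, z a ≠ 0 := by
    refine sub_ne_zero.2 fun h => ?_
    have := norm_tsum_le_tsum_norm (f := z) (by simpa using hxz 0)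
    rw [← h, norm_one] at this
    exact this.not_gt hz
  have hlevel (j : ℕ) : Summable fun m => ∑' t : Fin m → α, wordTerm x z j t :=
    (hw j).of_norm.sigma
  refine eq_binomialRec (c := fun k => ∑' w : Σ m, Fin m → α, wordTerm x z k w.2) hu
    (fun k => ?_) k
  have hsucc : ∑' m, ∑' t : Fin (m + 1) → α, wordTerm x z k t = ∑ j ∈ Finset.range (k + 1),
      k.choose j * (∑' a, x a ^ (k - j) * z a) * ∑' w : Σ m, Fin m → α, wordTerm x z j w.2 := by
    simp only [fun m => tsum_wordTerm_succ hxz (fun j => (hw j).sigma_factor m) k]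
    rw [Summable.tsum_finsetSum fun j _ => (hlevel j).mul_left _]
    simp only [tsum_mul_left, (hw _).of_norm.tsum_sigma]
  have htot : ∑' w : Σ m, Fin m → α, wordTerm x z k w.2 = (if k = 0 then 1 else 0) +
      ∑' m, ∑' t : Fin (m + 1) → α, wordTerm x z k t := by
    rw [(hw k).of_norm.tsum_sigma, (hlevel k).tsum_eq_zero_add]
    simp [wordTerm_fin_zero]
  rw [hsucc, Finset.sum_range_succ] at htot
  simp only [Nat.choose_self, Nat.sub_self, pow_zero, one_mul, Nat.cast_one] at htot
  linear_combination htot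

end WordSum

section MomentSeries

/-- The product and the length of a word, that is, the pair `(n, m)` for which the word is counted
by `af P m n`. -/
def prodLength {P : Set ℕ} (w : Σ m, Fin m → P) : ℕ × ℕ := (∏ i, (w.2 i : ℕ), w.1)

/-- The contribution `(m - μ log n) ^ k * n ^ (-s)` to `Mser P μ k s` of a word of length `m` and
product `n`, written additively and multiplicatively in the letters of the word. -/
def momentTerm {P : Set ℕ} (μ : ℝ) (k : ℕ) (s : ℂ) (w : Σ m, Fin m → P) : ℂ :=
  wordTerm (fun p : P => 1 - μ * Real.log p) (fun p => ((p : ℕ) : ℂ) ^ (-s)) k w.2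

lemma card_prodLength_preimage (P : Set ℕ) (m n : ℕ) :
    Nat.card (prodLength (P := P) ⁻¹' {(n, m)}) = af P m n := by
  refine (Nat.card_congr (Equiv.ofBijective (fun t : {t : Fin m → ℕ // (∀ i, t i ∈ P) ∧
    ∏ i, t i = n} => ⟨⟨m, fun i => ⟨t.1 i, t.2.1 i⟩⟩, by simp [prodLength, t.2.2]⟩) ⟨?_, ?_⟩)).symm
  · intro t t' h
    simp only [Subtype.mk.injEq, Sigma.mk.injEq, heq_eq_eq, true_and, funext_iff] at h
    exact Subtype.ext (funext h)
  · rintro ⟨⟨m', t⟩, h⟩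
    obtain ⟨hn, rfl⟩ := Prod.mk.inj h
    exact ⟨⟨fun i => t i, fun i => (t i).2, hn⟩, rfl⟩

lemma natCast_prod_cpow {ι : Type*} (u : Finset ι) (f : ι → ℕ) (s : ℂ) :
    ((∏ i ∈ u, f i : ℕ) : ℂ) ^ s = ∏ i ∈ u, (f i : ℂ) ^ s := by
  induction u using Finset.cons_induction with
  | empty => simp
  | cons i u hi ih =>
    rw [Finset.prod_cons, Finset.prod_cons, Nat.cast_mul, Complex.natCast_mul_natCast_cpow, ih]

lemma momentTerm_eq {P : Set ℕ} (hP : 0 ∉ P) (μ : ℝ) (k : ℕ) (s : ℂ) (w : Σ m, Fin m → P) :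
    momentTerm μ k s w = ((prodLength w).2 - μ * Real.log (prodLength w).1) ^ k *
      ((prodLength w).1 : ℂ) ^ (-s) := by
  have hne (p : P) : ((p : ℕ) : ℝ) ≠ 0 := Nat.cast_ne_zero.2 fun h => hP (h ▸ p.2)
  rw [momentTerm, wordTerm, prodLength, natCast_prod_cpow, Nat.cast_prod,
    Real.log_prod fun i _ => hne (w.2 i), Complex.ofReal_sum, Finset.mul_sum,
    Finset.sum_sub_distrib]
  simp

lemma Mser_eq_tsum_momentTerm {P : Set ℕ} (hP : 0 ∉ P) {μ : ℝ} {k : ℕ} {s : ℂ}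
    (hw : Summable (momentTerm (P := P) μ k s)) :
    Mser P μ k s = ∑' w : Σ m, Fin m → P, momentTerm μ k s w := by
  have hfib := hw.hasSum.tsum_fiberwise prodLength
  have hterm (q : ℕ × ℕ) : ∑' w : prodLength (P := P) ⁻¹' {q}, momentTerm μ k s w.1 =
      ((af P q.2 q.1 * (q.2 - μ * Real.log q.1) ^ k : ℝ) : ℂ) * (q.1 : ℂ) ^ (-s) := by
    have hconst (w : prodLength (P := P) ⁻¹' {q}) : momentTerm μ k s w.1 =
        (q.2 - μ * Real.log q.1) ^ k * (q.1 : ℂ) ^ (-s) := by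
      rw [momentTerm_eq hP, show prodLength w.1 = q from w.2]
    rw [tsum_congr hconst, tsum_const, card_prodLength_preimage, nsmul_eq_mul]
    push_cast
    ring
  simp only [hterm] at hfib
  rw [← hfib.tsum_eq, hfib.summable.tsum_prod, Mser]
  simp only [tsum_mul_right, ← Complex.ofReal_tsum, bCoef]

end MomentSeries

section DirichletSeries

/-- The Dirichlet series `𝒫(s) = ∑_{n ∈ 𝒫} n^{-s}` at a complex point, as an `LSeries`. -/
def Pser (P : Set ℕ) : ℂ → ℂ := LSeries (P.indicator 1)

lemma logMul_iterate_apply (f : ℕ → ℂ) (i n : ℕ) :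
    (LSeries.logMul^[i] f) n = (Real.log n : ℂ) ^ i * f n := by
  induction i with
  | zero => simp
  | succ i ih =>
    rw [Function.iterate_succ_apply', LSeries.logMul, ih, ← Complex.natCast_log]
    ring

lemma LSeries_term_logMul_iterate_indicator {P : Set ℕ} (hP : 0 ∉ P) (s : ℂ) (i : ℕ) :
    LSeries.term (LSeries.logMul^[i] (P.indicator 1)) s =
      P.indicator fun n => (Real.log n : ℂ) ^ i * (n : ℂ) ^ (-s) := by
  ext n
  rw [LSeries.term_def₀ (by simp [logMul_iterate_apply, hP]), logMul_iterate_apply]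
  by_cases hn : n ∈ P <;> simp [hn]

lemma LSeriesSummable_indicator_iff {P : Set ℕ} (hP : 0 ∉ P) (x : ℝ) :
    LSeriesSummable (P.indicator 1) x ↔ Summable fun n : P => ((n : ℕ) : ℝ) ^ (-x) := by
  have := LSeries_term_logMul_iterate_indicator hP x 0
  rw [Function.iterate_zero, id] at this
  rw [LSeriesSummable, this, ← summable_subtype_iff_indicator, ← Complex.summable_ofReal]
  refine summable_congr fun n => ?_
  simp [Complex.ofReal_cpow]

lemma kappa_eq_abscissaOfAbsConv {P : Set ℕ} (hP : 0 ∉ P) :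
    kappa P = LSeries.abscissaOfAbsConv (P.indicator 1) := by
  rw [kappa, LSeries.abscissaOfAbsConv]
  congr 1
  ext x
  simp [LSeriesSummable_indicator_iff hP, eq_comm, and_comm]

variable {P : Set ℕ}

lemma zero_notMem_of_two_le (hP : ∀ n ∈ P, 2 ≤ n) : 0 ∉ P := fun h => by simpa using hP 0 h

lemma analyticAt_Pser (hP : 0 ∉ P) {s : ℂ} (hs : kappa P < s.re) : AnalyticAt ℂ (Pser P) s :=
  LSeries_analyticOnNhd (P.indicator 1) s (kappa_eq_abscissaOfAbsConv hP ▸ hs)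

lemma hasSum_log_pow_mul_cpow (hP : 0 ∉ P) {s : ℂ} (hs : kappa P < s.re) (i : ℕ) :
    HasSum (fun p : P => (Real.log p : ℂ) ^ i * ((p : ℕ) : ℂ) ^ (-s))
      ((-1) ^ i * iteratedDeriv i (Pser P) s) := by
  rw [kappa_eq_abscissaOfAbsConv hP] at hs
  have hsum : LSeriesSummable (LSeries.logMul^[i] (P.indicator 1)) s :=
    LSeriesSummable_of_abscissaOfAbsConv_lt_re (by rwa [LSeries.absicssaOfAbsConv_logPowMul])
  have := hsum.LSeriesHasSum
  rw [LSeriesHasSum, LSeries_term_logMul_iterate_indicator hP,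
    ← hasSum_subtype_iff_indicator] at this
  rw [Pser, LSeries_iteratedDeriv i hs, ← mul_assoc, ← mul_pow]
  simpa [Function.comp_def] using this

lemma hasSum_one_sub_log_pow_mul_cpow (hP : 0 ∉ P) {s : ℂ} (hs : kappa P < s.re) (μ : ℂ)
    (j : ℕ) :
    HasSum (fun p : P => (1 - μ * Real.log p) ^ j * ((p : ℕ) : ℂ) ^ (-s))
      (tiltedDeriv μ (Pser P) j s) := by
  have hpoly (L : ℂ) :
      (1 - μ * L) ^ j = ∑ i ∈ Finset.range (j + 1), j.choose i * (-μ) ^ i * L ^ i := by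
    rw [sub_eq_neg_add, add_pow]
    refine Finset.sum_congr rfl fun i _ => ?_
    rw [← neg_mul, mul_pow]
    ring
  have hsign (i : ℕ) : (-μ) ^ i * (-1) ^ i = μ ^ i := by rw [← mul_pow, neg_mul_neg, mul_one]
  simp only [hpoly, Finset.sum_mul, tiltedDeriv, ← hsign, mul_assoc]
  exact hasSum_sum fun i _ => ((hasSum_log_pow_mul_cpow hP hs i).mul_left _).mul_left _

lemma hasSum_rpow_mul_log_pow (hP : 0 ∉ P) {x : ℝ} (hx : kappa P < x) (i : ℕ) :
    HasSum (fun p : P => ((((p : ℕ) : ℝ) ^ (-x) * Real.log p ^ i : ℝ) : ℂ))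
      ((-1) ^ i * iteratedDeriv i (Pser P) x) := by
  convert hasSum_log_pow_mul_cpow hP (s := x) hx i using 2 with p
  push_cast [Complex.ofReal_cpow (Nat.cast_nonneg (p : ℕ))]
  ring

lemma ofReal_Pval (hP : 0 ∉ P) {x : ℝ} (hx : kappa P < x) : (Pval P x : ℂ) = Pser P x := by
  simpa [Pval, Complex.ofReal_tsum] using (hasSum_rpow_mul_log_pow hP hx 0).tsum_eq

lemma ofReal_Pderiv1 (hP : 0 ∉ P) {x : ℝ} (hx : kappa P < x) :
    (Pderiv1 P x : ℂ) = deriv (Pser P) x := by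
  simpa [Pderiv1, Complex.ofReal_tsum, neg_eq_iff_eq_neg] using
    (hasSum_rpow_mul_log_pow hP hx 1).tsum_eq

lemma ofReal_Pderiv2 (hP : 0 ∉ P) {x : ℝ} (hx : kappa P < x) :
    (Pderiv2 P x : ℂ) = iteratedDeriv 2 (Pser P) x := by
  simpa [Pderiv2, Complex.ofReal_tsum] using (hasSum_rpow_mul_log_pow hP hx 2).tsum_eq

lemma summable_rpow_neg (hP : 0 ∉ P) {x : ℝ} (hx : kappa P < x) :
    Summable fun p : P => ((p : ℕ) : ℝ) ^ (-x) := by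
  simpa using Complex.summable_ofReal.1 (hasSum_rpow_mul_log_pow hP hx 0).summable

lemma Pval_lt_Pval (hP : ∀ n ∈ P, 2 ≤ n) (hne : P.Nonempty) {x y : ℝ} (hx : kappa P < x)
    (hxy : x < y) : Pval P y < Pval P x := by
  have h0 := zero_notMem_of_two_le hP
  obtain ⟨q, hq⟩ := hne
  have hlt (p : P) : ((p : ℕ) : ℝ) ^ (-y) < ((p : ℕ) : ℝ) ^ (-x) :=
    Real.rpow_lt_rpow_of_exponent_lt (by exact_mod_cast hP p p.2) (neg_lt_neg hxy)
  exact Summable.tsum_lt_tsum (i := ⟨q, hq⟩) (fun p => (hlt p).le) (hlt _)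
    (summable_rpow_neg h0 (hx.trans (EReal.coe_lt_coe_iff.2 hxy))) (summable_rpow_neg h0 hx)

lemma Pderiv1_neg (hP : ∀ n ∈ P, 2 ≤ n) (hne : P.Nonempty) {x : ℝ} (hx : kappa P < x) :
    Pderiv1 P x < 0 := by
  have h0 := zero_notMem_of_two_le hP
  obtain ⟨q, hq⟩ := hne
  have hpos (p : P) : 0 < ((p : ℕ) : ℝ) ^ (-x) * Real.log (p : ℕ) := by
    have := hP p p.2
    exact mul_pos (Real.rpow_pos_of_pos (by positivity) _) (Real.log_pos (by exact_mod_cast this))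
  have hsum : Summable fun p : P => ((p : ℕ) : ℝ) ^ (-x) * Real.log (p : ℕ) := by
    simpa using Complex.summable_ofReal.1 (hasSum_rpow_mul_log_pow h0 hx 1).summable
  exact neg_neg_of_pos (hsum.tsum_pos (fun p => (hpos p).le) ⟨q, hq⟩ (hpos _))

end DirichletSeries

section Nonvanishing

lemma eq_of_tsum_eq_tsum_of_norm_le {ι : Type*} {z : ι → ℂ} {r : ι → ℝ} (hr : Summable r)
    (hz : ∀ i, ‖z i‖ ≤ r i) (h : ∑' i, z i = ∑' i, (r i : ℂ)) (i : ι) : z i = r i := by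
  have hzsum : Summable z := .of_norm_bounded hr hz
  have hre (i : ι) : (z i).re ≤ r i := (Complex.re_le_norm _).trans (hz i)
  have hri : (z i).re = r i := by
    refine (hre i).antisymm (not_lt.1 fun hlt => ?_)
    have := Summable.tsum_lt_tsum hre hlt (Complex.hasSum_re hzsum.hasSum).summable hr
    rw [← Complex.re_tsum hzsum, h, ← Complex.ofReal_tsum, Complex.ofReal_re] at this
    exact this.false
  have him : (z i).im = 0 := Complex.abs_re_eq_norm.1
    ((Complex.abs_re_le_norm _).antisymm ((hz i).trans (hri ▸ le_abs_self _)))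
  exact Complex.ext (by simpa using hri) (by simpa using him)

lemma exists_base_of_two_le {a : ℕ} (ha : 2 ≤ a) :
    ∃ d, 2 ≤ d ∧ ∀ n i j : ℕ, i ≠ 0 → n ^ i = a ^ j → ∃ k, n = d ^ k := by
  classical
  have hex : ∃ d, ∃ k, d ^ k = a := ⟨a, 1, pow_one a⟩
  obtain ⟨k, hk⟩ := Nat.find_spec hex
  set d := Nat.find hex
  have hd2 : 2 ≤ d := by
    by_contra! hlt
    have := pow_le_one₀ (n := k) (Nat.zero_le d) (by omega)
    omega
  refine ⟨d, hd2, fun n i j hi hn => ?_⟩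
  rw [← hk, ← pow_mul] at hn
  obtain ⟨c, hnc, hdc⟩ := Nat.exists_eq_pow_of_pow_eq_pow (Or.inl hi) hn
  have hle : d ≤ c := Nat.find_min' hex ⟨i / i.gcd (k * j) * k, by rw [pow_mul, ← hdc, hk]⟩
  have hexp : i / i.gcd (k * j) = 1 := by
    refine le_antisymm ?_
      (Nat.div_pos (Nat.gcd_le_left _ hi.bot_lt) (Nat.gcd_pos_of_pos_left _ hi.bot_lt))
    rw [← Nat.pow_le_pow_iff_right (a := c) (by omega), ← hdc, pow_one]
    exact hle
  rw [hexp, pow_one] at hdc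
  exact ⟨_, hdc ▸ hnc⟩

lemma exists_powers_of_log_mem_zmultiples {P : Set ℕ} (hP : ∀ n ∈ P, 2 ≤ n) {c : ℝ}
    (hc : ∀ n ∈ P, ∃ l : ℤ, Real.log n = l * c) :
    ∃ d, 2 ≤ d ∧ P ⊆ {n | ∃ k : ℕ, 1 ≤ k ∧ n = d ^ k} := by
  rcases P.eq_empty_or_nonempty with rfl | ⟨a, ha⟩
  · exact ⟨2, le_rfl, Set.empty_subset _⟩
  obtain ⟨d, hd, hpow⟩ := exists_base_of_two_le (hP a ha)
  refine ⟨d, hd, fun n hn => ?_⟩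
  have hlog {m : ℕ} (hm : m ∈ P) : 0 < Real.log m := Real.log_pos (by exact_mod_cast hP m hm)
  obtain ⟨i, hi⟩ := hc a ha
  obtain ⟨j, hj⟩ := hc n hn
  have hi0 : i ≠ 0 := by
    rintro rfl
    exact (hlog ha).ne' (by simpa using hi)
  have habs : n ^ i.natAbs = a ^ j.natAbs := by
    have : |(i : ℝ) * Real.log n| = |(j : ℝ) * Real.log a| := by rw [hi, hj, mul_left_comm]
    rw [abs_mul, abs_mul, abs_of_pos (hlog hn), abs_of_pos (hlog ha), ← Int.cast_abs,
      ← Int.cast_abs, ← Nat.cast_natAbs, ← Nat.cast_natAbs, ← Real.log_pow, ← Real.log_pow] at this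
    exact_mod_cast Real.log_injOn_pos (Set.mem_Ioi.2 (by have := hP n hn; positivity))
      (Set.mem_Ioi.2 (by have := hP a ha; positivity)) this
  obtain ⟨k, rfl⟩ := hpow n _ _ (Int.natAbs_ne_zero.2 hi0) habs
  refine ⟨k, Nat.one_le_iff_ne_zero.2 ?_, rfl⟩
  rintro rfl
  simpa using hP _ hn

lemma exists_int_of_natCast_cpow_eq {n : ℕ} (hn : n ≠ 0) {s w : ℂ}
    (h : (n : ℂ) ^ (-s) = (n : ℂ) ^ (-w)) :
    ∃ l : ℤ, Real.log n * (w - s) = l * (2 * Real.pi * Complex.I) := by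
  rw [Complex.cpow_def_of_ne_zero (Nat.cast_ne_zero.2 hn),
    Complex.cpow_def_of_ne_zero (Nat.cast_ne_zero.2 hn), ← Complex.natCast_log,
    Complex.exp_eq_exp_iff_exists_int] at h
  obtain ⟨l, hl⟩ := h
  exact ⟨l, by linear_combination hl⟩

variable {P : Set ℕ} {ρ : ℝ}

lemma cpow_eq_cpow_of_Pser_eq_one (hP : 0 ∉ P) (hρκ : kappa P < ρ)
    (hρ1 : Pval P ρ = 1) {s : ℂ} (hs : ρ ≤ s.re) (h : Pser P s = 1) {n : ℕ} (hn : n ∈ P) :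
    (n : ℂ) ^ (-s) = (n : ℂ) ^ (-ρ : ℂ) := by
  have hone (p : P) : 1 ≤ (p : ℕ) := Nat.one_le_iff_ne_zero.2 fun h0 => hP (h0 ▸ p.2)
  have hz (p : P) : ‖((p : ℕ) : ℂ) ^ (-s)‖ ≤ ((p : ℕ) : ℝ) ^ (-ρ) := by
    rw [Complex.norm_natCast_cpow_of_pos (hone p), Complex.neg_re]
    exact Real.rpow_le_rpow_of_exponent_le (by exact_mod_cast hone p) (neg_le_neg hs)
  have hsκ : kappa P < s.re := hρκ.trans_le (EReal.coe_le_coe_iff.2 hs)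
  have hsum : ∑' p : P, ((p : ℕ) : ℂ) ^ (-s) = ∑' p : P, ((((p : ℕ) : ℝ) ^ (-ρ) : ℝ) : ℂ) := by
    rw [← Complex.ofReal_tsum, ← Pval, hρ1, Complex.ofReal_one, ← h]
    simpa using (hasSum_log_pow_mul_cpow hP hsκ 0).tsum_eq
  simpa [Complex.ofReal_cpow] using
    eq_of_tsum_eq_tsum_of_norm_le (summable_rpow_neg hP hρκ) hz hsum ⟨n, hn⟩

lemma Pser_ne_one (hP : ∀ n ∈ P, 2 ≤ n) (hρκ : kappa P < ρ) (hρ1 : Pval P ρ = 1)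
    (hnp : ∀ d : ℕ, 2 ≤ d → ¬ P ⊆ {n : ℕ | ∃ k : ℕ, 1 ≤ k ∧ n = d ^ k})
    {s : ℂ} (hs : ρ ≤ s.re) (hsρ : s ≠ ρ) : Pser P s ≠ 1 := by
  intro h
  have h0 := zero_notMem_of_two_le hP
  have hper : ∀ n ∈ P, ∃ l : ℤ, Real.log n * (ρ - s) = l * (2 * Real.pi * Complex.I) :=
    fun n hn => exists_int_of_natCast_cpow_eq (fun hn0 => h0 (hn0 ▸ hn))
      (cpow_eq_cpow_of_Pser_eq_one h0 hρκ hρ1 hs h hn)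
  have hre : s.re = ρ := by
    obtain ⟨a, ha⟩ : P.Nonempty := Set.nonempty_iff_ne_empty.2 fun he => by simp [Pval, he] at hρ1
    obtain ⟨l, hl⟩ := hper a ha
    have hlog : Real.log a ≠ 0 := (Real.log_pos (by exact_mod_cast hP a ha)).ne'
    have : Real.log a = 0 ∨ ρ - s.re = 0 := by
      simpa [-Complex.natCast_log] using congrArg Complex.re hl
    exact (sub_eq_zero.1 (this.resolve_left hlog)).symm
  have him : s.im ≠ 0 := fun him => hsρ (Complex.ext (by simpa using hre) (by simpa using him))
  obtain ⟨d, hd, hPd⟩ := exists_powers_of_log_mem_zmultiples hP (c := 2 * Real.pi / s.im)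
    fun n hn => by
      obtain ⟨l, hl⟩ := hper n hn
      have : -(Real.log n * s.im) = l * (2 * Real.pi) := by
        simpa [-Complex.natCast_log] using congrArg Complex.im hl
      refine ⟨-l, ?_⟩
      field_simp
      push_cast
      linarith
  exact hnp d hd hPd

end Nonvanishing

section PoleAtRho

variable {P : Set ℕ}

lemma Mser_eq_resolventMoment (hP : 0 ∉ P) {s : ℂ} (hs : kappa P < s.re) (hs1 : Pval P s.re < 1)
    (μ : ℝ) (k : ℕ) : Mser P μ k s = resolventMoment (μ : ℂ) (Pser P) k s := by
  have hnorm (p : P) : ‖((p : ℕ) : ℂ) ^ (-s)‖ = ((p : ℕ) : ℝ) ^ (-s.re) :=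
    Complex.norm_natCast_cpow_of_pos (Nat.pos_of_ne_zero fun h => hP (h ▸ p.2)) _
  have hz : ∑' p : P, ‖((p : ℕ) : ℂ) ^ (-s)‖ < 1 := by
    rwa [tsum_congr hnorm, ← Pval]
  have hsum := hasSum_one_sub_log_pow_mul_cpow hP hs μ
  have hxz (j : ℕ) : Summable fun p : P =>
    ‖(1 - μ * Real.log p : ℂ) ^ j * ((p : ℕ) : ℂ) ^ (-s)‖ := (hsum j).summable.norm
  rw [Mser_eq_tsum_momentTerm hP (summable_norm_wordTerm hz hxz k).of_norm, resolventMoment]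
  simp only [momentTerm]
  rw [tsum_wordTerm_eq_binomialRec hz hxz]
  simp only [fun j => (hsum j).tsum_eq]
  rw [← tiltedDeriv_zero (μ : ℂ) (Pser P), ← (hsum 0).tsum_eq]
  simp only [pow_zero, one_mul]

lemma tiltedDeriv_one_Pser_eq_zero (hP : 0 ∉ P) {ρ : ℝ} (hρκ : kappa P < ρ) (hρ1 : Pval P ρ = 1)
    (hd : Pderiv1 P ρ ≠ 0) : tiltedDeriv ((-1 / Pderiv1 P ρ : ℝ) : ℂ) (Pser P) 1 ρ = 0 := by
  rw [tiltedDeriv_one, ← ofReal_Pval hP hρκ, ← ofReal_Pderiv1 hP hρκ, hρ1, ← Complex.ofReal_mul,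
    div_mul_cancel₀ _ hd]
  simp

lemma resolventNumerator_Pser_self (hP : 0 ∉ P) {ρ : ℝ} (hρκ : kappa P < ρ)
    (hρ1 : Pval P ρ = 1) (hd : Pderiv1 P ρ ≠ 0) {μ σsq : ℝ} (hμ : μ = -1 / Pderiv1 P ρ)
    (hσsq : σsq = μ ^ 3 * Pderiv2 P ρ - μ) {k : ℕ} (hk : Even k) :
    resolventNumerator (μ : ℂ) (Pser P) ρ k ρ =
      μ * ((σsq / 2 : ℝ) : ℂ) ^ (k / 2) * k.factorial := by
  have hderiv : Pderiv1 P ρ = -1 / μ := by rw [hμ]; field_simp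
  have hμ0 : μ ≠ 0 := by
    rintro rfl
    simp [hderiv] at hd
  rw [resolventNumerator_self_of_even hk, tiltedDeriv_two, ← ofReal_Pval hP hρκ,
    ← ofReal_Pderiv1 hP hρκ, ← ofReal_Pderiv2 hP hρκ, hρ1, hderiv]
  have hratio : (1 + 2 * μ * (-1 / μ) + μ ^ 2 * Pderiv2 P ρ) / (2 * -(-1 / μ)) = σsq / 2 := by
    rw [hσsq]
    field_simp
    ring
  rw [← hratio]
  push_cast
  field_simp

end PoleAtRho

/-- **Analytic continuation and pole structure of `M_k`.** Under the stated assumptions,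
including non-periodicity, each `M_k` extends analytically to the closed half-plane
`Re s ≥ ρ` except at `s = ρ`, where it has a pole of order at most `⌊k/2⌋ + 1`; moreover,
for even `k`, `M_k(s) ∼ μ (σ²/2)^{k/2} k! (s - ρ)^{-k/2-1}` as `s → ρ`, `Re s > ρ`. -/
theorem Mser_pole_structure
    (P : Set ℕ) (hP : ∀ n ∈ P, 2 ≤ n) (hP2 : P.Nontrivial)
    (hκ : 1 < PvalE P (kappa P))
    (ρ : ℝ) (hρ0 : 0 < ρ) (hρκ : kappa P < (ρ : EReal)) (hρ1 : Pval P ρ = 1)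
    (μ σsq : ℝ) (hμ : μ = -1 / Pderiv1 P ρ) (hσsq : σsq = μ ^ 3 * Pderiv2 P ρ - μ)
    (hnp : ∀ d : ℕ, 2 ≤ d → ¬ P ⊆ {n : ℕ | ∃ k : ℕ, 1 ≤ k ∧ n = d ^ k}) :
    ∀ k : ℕ, ∃ g : ℂ → ℂ,
      (∀ s : ℂ, ρ < s.re → g s = Mser P μ k s) ∧
      (∀ s : ℂ, ρ ≤ s.re → s ≠ (ρ : ℂ) → AnalyticAt ℂ g s) ∧
      (∃ h : ℂ → ℂ, AnalyticAt ℂ h (ρ : ℂ) ∧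
        ∀ s : ℂ, ρ ≤ s.re → s ≠ (ρ : ℂ) → g s = h s / (s - (ρ : ℂ)) ^ (k / 2 + 1)) ∧
      (Even k →
        Tendsto (fun s : ℂ => Mser P μ k s * (s - (ρ : ℂ)) ^ (k / 2 + 1))
          (nhdsWithin (ρ : ℂ) {s : ℂ | ρ < s.re})
          (nhds ((μ : ℂ) * ((σsq / 2 : ℝ) : ℂ) ^ (k / 2) * (Nat.factorial k : ℂ)))) := by
  intro k
  have h0 := zero_notMem_of_two_le hP
  have hd : Pderiv1 P ρ < 0 := Pderiv1_neg hP hP2.nonempty hρκ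
  have hdρ : deriv (Pser P) ρ ≠ 0 := by rw [← ofReal_Pderiv1 h0 hρκ]; exact_mod_cast hd.ne
  have hFρ : Pser P ρ = 1 := by rw [← ofReal_Pval h0 hρκ, hρ1, Complex.ofReal_one]
  have h1 : tiltedDeriv (μ : ℂ) (Pser P) 1 ρ = 0 :=
    hμ ▸ tiltedDeriv_one_Pser_eq_zero h0 hρκ hρ1 hd.ne
  have hκ' {s : ℂ} (hs : ρ ≤ s.re) : kappa P < s.re := hρκ.trans_le (EReal.coe_le_coe_iff.2 hs)
  have hM {s : ℂ} (hs : ρ < s.re) : resolventMoment (μ : ℂ) (Pser P) k s = Mser P μ k s :=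
    (Mser_eq_resolventMoment h0 (hκ' hs.le) (hρ1 ▸ Pval_lt_Pval hP hP2.nonempty hρκ hs) μ k).symm
  have hh := analyticAt_resolventNumerator (analyticAt_Pser h0 (hκ' le_rfl)) hdρ μ k
  refine ⟨resolventMoment (μ : ℂ) (Pser P) k, fun s => hM, fun s hs hsρ =>
    analyticAt_resolventMoment (analyticAt_Pser h0 (hκ' hs))
      (Pser_ne_one hP hρκ hρ1 hnp hs hsρ) μ k,
    ⟨resolventNumerator (μ : ℂ) (Pser P) ρ k, hh, fun s _ hsρ => ?_⟩, fun hk => ?_⟩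
  · rw [eq_div_iff (pow_ne_zero _ (sub_ne_zero.2 hsρ)), resolventMoment_mul_pow hFρ h1 hsρ]
  · rw [← resolventNumerator_Pser_self h0 hρκ hρ1 hd.ne hμ hσsq hk]
    refine (hh.continuousAt.tendsto.mono_left nhdsWithin_le_nhds).congr' ?_
    filter_upwards [self_mem_nhdsWithin] with s (hs : ρ < s.re)
    rw [← hM hs, resolventMoment_mul_pow hFρ h1 (by rintro rfl; simp at hs)]
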